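/- Let ψ be uniformly distributed on the unit sphere of C^d and let Δ be Hermitian. For every integer q ≥ 1, E[(tr(Δ |ψ⟩⟨ψ|))^{2q}] ≤ ((2q)! / d^{2q}) · (tr(Δ²) + (tr Δ)²)^q, and consequently (E[(d·|⟨ψ|Δ|ψ⟩|)^{2q}])^{1/(2q)} ≤ 2q · sqrt(tr(Δ²) + (tr Δ)²). -/

import Mathlib

open Matrix BigOperators MeasureTheory

/-- complete homogeneous symmetric polynomial -/
noncomputable def hcomp {d : ℕ} (l : Fin d → ℝ) (n : ℕ) : ℝ :=
  ∑ a ∈ Finset.piAntidiag (Finset.univ : Finset (Fin d)) n, ∏ i, l i ^ a i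

lemma hcomp_shift {d : ℕ} (l : Fin d → ℝ) (n k : ℕ) (hk : k < n) (i : Fin d) :
    ∑ a ∈ (Finset.piAntidiag (Finset.univ : Finset (Fin d)) n) with k < a i, ∏ j, l j ^ a j
      = l i ^ (k+1) * hcomp l (n - 1 - k) := by
  classical
  rw [hcomp, Finset.mul_sum]
  symm
  refine Finset.sum_bij' (fun b _ => b + Pi.single i (k+1)) (fun a _ => a - Pi.single i (k+1))
    ?_ ?_ ?_ ?_ ?_
  · intro b hb
    simp only [Finset.mem_piAntidiag, Finset.mem_filter, Finset.mem_univ, implies_true, and_true] at hb ⊢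
    simp [Finset.sum_add_distrib, hb]
    omega
  · intro a ha
    simp only [Finset.mem_piAntidiag, Finset.mem_filter, Finset.mem_univ, implies_true, and_true] at ha ⊢
    have h1 : a = (a - Pi.single i (k+1)) + Pi.single i (k+1) := by
      ext j
      by_cases h : j = i
      · subst h; simp; omega
      · simp [h]
    have h2 : ∑ j, a j = ∑ j, ((a - Pi.single i (k+1) : Fin d → ℕ) j + (Pi.single i (k+1) : Fin d → ℕ) j) :=
      Finset.sum_congr rfl fun j _ => congrFun h1 j
    rw [Finset.sum_add_distrib, Finset.sum_pi_single', if_pos (Finset.mem_univ _)] at h2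
    have h3 : ∑ j, a j = n := ha.1
    change ∑ j, (a - Pi.single i (k+1) : Fin d → ℕ) j = _
    omega
  · intro b hb
    simp
  · intro a ha
    simp only [Finset.mem_piAntidiag, Finset.mem_filter, Finset.mem_univ, implies_true, and_true] at ha
    ext j
    by_cases h : j = i
    · subst h; simp; omega
    · simp [h]
  · intro b hb
    simp only [Pi.add_apply, pow_add, Finset.prod_mul_distrib]
    rw [mul_comm]
    congr 1
    rw [Finset.prod_eq_single i]
    · simp [pow_add]
    · intro j _ hj; simp [hj]
    · simp

lemma hcomp_newton {d : ℕ} (l : Fin d → ℝ) (n : ℕ) :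
    (n : ℝ) * hcomp l n = ∑ k ∈ Finset.range n, (∑ i, l i ^ (k+1)) * hcomp l (n - 1 - k) := by
  have h1 : (n : ℝ) * hcomp l n = ∑ a ∈ Finset.piAntidiag (Finset.univ : Finset (Fin d)) n,
      ∑ i, ∑ k ∈ Finset.range n, if k < a i then ∏ j, l j ^ a j else 0 := by
    rw [hcomp, Finset.mul_sum]
    refine Finset.sum_congr rfl fun a ha => ?_
    simp only [Finset.mem_piAntidiag, Finset.mem_univ, implies_true, and_true] at ha
    rw [← ha]
    push_cast
    rw [Finset.sum_mul]
    refine Finset.sum_congr rfl fun i _ => ?_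
    rw [← Finset.sum_filter]
    have : (Finset.range (∑ j, a j)).filter (fun k => k < a i) = Finset.range (a i) := by
      ext k
      have := Finset.single_le_sum (f := a) (fun j _ => Nat.zero_le _) (Finset.mem_univ i)
      simp; omega
    rw [this]; simp
  rw [h1, Finset.sum_comm, ]
  simp_rw [Finset.sum_mul]
  rw [Finset.sum_comm (s := Finset.range n)]
  refine Finset.sum_congr rfl fun i _ => ?_
  rw [Finset.sum_comm]
  refine Finset.sum_congr rfl fun k hk => ?_
  rw [← Finset.sum_filter, hcomp_shift l n k (Finset.mem_range.1 hk)]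

lemma psum_bound {d : ℕ} (l : Fin d → ℝ) (B : ℝ) (hB : 0 ≤ B)
    (hS : (∑ i, l i ^ 2) + (∑ i, l i) ^ 2 = B ^ 2) (k : ℕ) :
    |∑ i, l i ^ (k+1)| ≤ B ^ (k+1) := by
  have hp2 : 0 ≤ ∑ i, l i ^ 2 := Finset.sum_nonneg fun i _ => sq_nonneg _
  rcases k with _ | k
  · simp only [zero_add, pow_one]
    exact abs_le_of_sq_le_sq (by linarith) hB
  · have hl : ∀ i, |l i| ≤ B := by
      intro i
      apply abs_le_of_sq_le_sq _ hB
      have := Finset.single_le_sum (f := fun i => l i ^ 2) (fun j _ => sq_nonneg _) (Finset.mem_univ i)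
      nlinarith [sq_nonneg (∑ i, l i)]
    calc |∑ i, l i ^ (k+1+1)| ≤ ∑ i, |l i ^ (k+1+1)| := Finset.abs_sum_le_sum_abs _ _
      _ ≤ ∑ i, B ^ k * l i ^ 2 := by
        refine Finset.sum_le_sum fun i _ => ?_
        rw [abs_pow, add_assoc, pow_add, one_add_one_eq_two, sq_abs]
        gcongr
        exact hl i
      _ = B ^ k * ∑ i, l i ^ 2 := by rw [Finset.mul_sum]
      _ ≤ B ^ k * B ^ 2 := by
        gcongr
        nlinarith [sq_nonneg (∑ i, l i)]
      _ = _ := by ring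

lemma hcomp_bound {d : ℕ} (l : Fin d → ℝ) (B : ℝ) (hB : 0 ≤ B)
    (hS : (∑ i, l i ^ 2) + (∑ i, l i) ^ 2 = B ^ 2) (n : ℕ) : |hcomp l n| ≤ B ^ n := by
  induction n using Nat.strong_induction_on with
  | _ n ih =>
    rcases Nat.eq_zero_or_pos n with rfl | hn
    · simp [hcomp]
    · have hn' : (0:ℝ) < n := by exact_mod_cast hn
      have : (n:ℝ) * |hcomp l n| ≤ n * B ^ n := by
        rw [← abs_of_pos hn', ← abs_mul, abs_of_pos hn', hcomp_newton]
        calc _ ≤ ∑ k ∈ Finset.range n, |(∑ i, l i ^ (k+1)) * hcomp l (n - 1 - k)| :=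
              Finset.abs_sum_le_sum_abs _ _
          _ ≤ ∑ k ∈ Finset.range n, B ^ n := by
            refine Finset.sum_le_sum fun k hk => ?_
            have hk := Finset.mem_range.1 hk
            rw [abs_mul]
            calc _ ≤ B ^ (k+1) * B ^ (n-1-k) := by
                  gcongr
                  · exact psum_bound l B hB hS k
                  · exact ih _ (by omega)
              _ = B ^ n := by rw [← pow_add]; congr 1; omega
          _ = _ := by simp
      exact le_of_mul_le_mul_left this hn'

lemma card_bound (d n : ℕ) : (d:ℝ) ^ n ≤ n.factorial *
    (Finset.piAntidiag (Finset.univ : Finset (Fin d)) n).card := by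
  have h := Finset.sum_pow_eq_sum_piAntidiag (Finset.univ : Finset (Fin d)) (fun _ => (1:ℝ)) n
  simp only [Finset.sum_const, Finset.card_univ, Fintype.card_fin, nsmul_eq_mul, mul_one, one_pow,
    Finset.prod_const_one] at h
  rw [h, mul_comm, ← nsmul_eq_mul, ← Finset.sum_const]
  refine Finset.sum_le_sum fun a ha => ?_
  simp only [Finset.mem_piAntidiag, Finset.mem_univ, implies_true, and_true] at ha
  rw [Nat.multinomial, ← ha]
  exact_mod_cast Nat.div_le_self _ _


section meas
set_option linter.unusedSectionVars false
variable {d : ℕ} [MeasurableSpace (EuclideanSpace ℂ (Fin d))]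
    [BorelSpace (EuclideanSpace ℂ (Fin d))] (μ : Measure (EuclideanSpace ℂ (Fin d))) [IsProbabilityMeasure μ]

lemma ae_sphere
    (hsphere : μ (Metric.sphere (0 : EuclideanSpace ℂ (Fin d)) 1) = 1)
    : ∀ᵐ x ∂μ, ‖x‖ = 1 := by
  have h : ∀ᵐ x ∂μ, x ∈ Metric.sphere (0 : EuclideanSpace ℂ (Fin d)) 1 := by
    rw [← prob_compl_eq_zero_iff (Metric.isClosed_sphere.measurableSet)] at hsphere
    exact hsphere
  filter_upwards [h] with x hx
  simpa using hx

lemma integrable_cont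
    (hsphere : μ (Metric.sphere (0 : EuclideanSpace ℂ (Fin d)) 1) = 1)
    {F : Type*} [NormedAddCommGroup F] [SecondCountableTopology F]
    (g : EuclideanSpace ℂ (Fin d) → F) (hg : Continuous g) : Integrable g μ := by
  obtain ⟨C, hC⟩ := (isCompact_sphere (0 : EuclideanSpace ℂ (Fin d)) 1).exists_bound_of_continuousOn
    hg.continuousOn
  refine Integrable.of_bound hg.aestronglyMeasurable C ?_
  filter_upwards [ae_sphere μ hsphere] with x hx
  exact hC x (by simpa using hx)

lemma int_unitary
    (hinv : ∀ U ∈ Matrix.unitaryGroup (Fin d) ℂ,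
      Measure.map (fun x : EuclideanSpace ℂ (Fin d) =>
        (EuclideanSpace.equiv (Fin d) ℂ).symm
          (Matrix.mulVec U ((EuclideanSpace.equiv (Fin d) ℂ) x))) μ = μ)
    {F : Type*} [NormedAddCommGroup F] [NormedSpace ℝ F] [SecondCountableTopology F]
    (U : Matrix (Fin d) (Fin d) ℂ) (hU : U ∈ Matrix.unitaryGroup (Fin d) ℂ)
    (g : EuclideanSpace ℂ (Fin d) → F) (hg : Continuous g) :
    ∫ x, g (WithLp.toLp 2 (U *ᵥ (WithLp.ofLp x))) ∂μ = ∫ x, g x ∂μ := by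
  conv_rhs => rw [← hinv U hU]
  rw [integral_map]
  · rfl
  · apply Continuous.aemeasurable
    have : Continuous (Matrix.toEuclideanCLM (n := Fin d) (𝕜 := ℂ) U) := by fun_prop
    exact this
  · exact hg.aestronglyMeasurable

lemma int_isom
    (hinv : ∀ U ∈ Matrix.unitaryGroup (Fin d) ℂ,
      Measure.map (fun x : EuclideanSpace ℂ (Fin d) =>
        (EuclideanSpace.equiv (Fin d) ℂ).symm
          (Matrix.mulVec U ((EuclideanSpace.equiv (Fin d) ℂ) x))) μ = μ)
    {F : Type*} [NormedAddCommGroup F] [NormedSpace ℝ F] [SecondCountableTopology F]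
    (L : EuclideanSpace ℂ (Fin d) ≃ₗᵢ[ℂ] EuclideanSpace ℂ (Fin d))
    (g : EuclideanSpace ℂ (Fin d) → F) (hg : Continuous g) :
    ∫ x, g (L x) ∂μ = ∫ x, g x ∂μ := by
  set V := Unitary.linearIsometryEquiv.symm L with hV
  set U := (Matrix.toEuclideanCLM (n := Fin d) (𝕜 := ℂ)).symm V.1 with hU
  have hUm : U ∈ Matrix.unitaryGroup (Fin d) ℂ := by
    rw [hU]
    exact Unitary.map_mem (Matrix.toEuclideanCLM (n := Fin d) (𝕜 := ℂ)).symm V.2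
  rw [← int_unitary μ hinv U hUm g hg]
  congr 1
  ext x
  congr 1
  have : Matrix.toEuclideanCLM (n := Fin d) (𝕜 := ℂ) U = V.1 := by simp [hU]
  calc L x = V.1 x := rfl
    _ = Matrix.toEuclideanCLM (n := Fin d) (𝕜 := ℂ) U x := by rw [this]
    _ = _ := rfl

/-- radial identity -/
lemma radial
    (hinv : ∀ U ∈ Matrix.unitaryGroup (Fin d) ℂ,
      Measure.map (fun x : EuclideanSpace ℂ (Fin d) =>
        (EuclideanSpace.equiv (Fin d) ℂ).symm
          (Matrix.mulVec U ((EuclideanSpace.equiv (Fin d) ℂ) x))) μ = μ)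
    (i0 : Fin d) (n : ℕ) (x : Fin d → ℝ) :
    ∫ ψ : EuclideanSpace ℂ (Fin d), ‖∑ i, (x i : ℂ) * ψ i‖ ^ (2 * n) ∂μ
      = (∑ i, x i ^ 2) ^ n * ∫ ψ : EuclideanSpace ℂ (Fin d), ‖ψ i0‖ ^ (2 * n) ∂μ := by
  obtain ⟨u, hu, r, hr, hxu⟩ : ∃ u : EuclideanSpace ℂ (Fin d), ‖u‖ = 1 ∧ ∃ r : ℝ,
      r ^ 2 = ∑ i, x i ^ 2 ∧ ∀ i, (x i : ℂ) = r * (starRingEnd ℂ) (u i) := by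
    set v : EuclideanSpace ℂ (Fin d) := WithLp.toLp 2 (fun i => (x i : ℂ)) with hv
    have hvn : ‖v‖ ^ 2 = ∑ i, x i ^ 2 := by
      rw [EuclideanSpace.norm_sq_eq]; simp [hv]
    by_cases h0 : v = 0
    · refine ⟨EuclideanSpace.single i0 1, by simp, 0, by rw [← hvn, h0]; simp, fun i => ?_⟩
      have : v i = 0 := by rw [h0]; rfl
      simpa [hv] using this
    · have hn : ‖v‖ ≠ 0 := by simpa using h0
      refine ⟨((‖v‖⁻¹ : ℝ) : ℂ) • v, ?_, ‖v‖, hvn, fun i => ?_⟩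
      · rw [norm_smul]; simp [hn]
      · have : (‖v‖ : ℂ) ≠ 0 := by exact_mod_cast hn
        have hvi : v i = (x i : ℂ) := rfl
        simp only [PiLp.smul_apply, smul_eq_mul, map_mul, Complex.conj_ofReal, hvi]
        push_cast
        field_simp
  have hon : Orthonormal ℂ (Set.domRestrict {i0} (fun _ : Fin d => u)) := by
    rw [orthonormal_iff_ite]
    rintro ⟨a, ha⟩ ⟨b, hb⟩
    simp only [Set.mem_singleton_iff] at ha hb
    subst ha; subst hb
    simp [inner_self_eq_norm_sq_to_K, hu]
  obtain ⟨b, hb⟩ := hon.exists_orthonormalBasis_extension_of_card_eq (by simp)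
  have hb0 : b i0 = u := hb i0 rfl
  rw [← int_isom μ hinv b.repr (fun ψ => ‖ψ i0‖ ^ (2 * n)) (by fun_prop), ← integral_const_mul]
  congr 1
  ext ψ
  rw [b.repr_apply_apply, hb0, PiLp.inner_apply]
  have : ∑ i, (x i : ℂ) * ψ i = r * ∑ i, inner ℂ (u i) (ψ i) := by
    rw [Finset.mul_sum]
    refine Finset.sum_congr rfl fun i _ => ?_
    rw [hxu i]; simp; ring
  rw [this, norm_mul, mul_pow, ← hr]
  congr 1
  rw [pow_mul, Complex.norm_real, Real.norm_eq_abs, sq_abs]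

lemma offdiag
    (hinv : ∀ U ∈ Matrix.unitaryGroup (Fin d) ℂ,
      Measure.map (fun x : EuclideanSpace ℂ (Fin d) =>
        (EuclideanSpace.equiv (Fin d) ℂ).symm
          (Matrix.mulVec U ((EuclideanSpace.equiv (Fin d) ℂ) x))) μ = μ)
    (a b : Fin d → ℕ) (hab : a ≠ b) :
    ∫ ψ : EuclideanSpace ℂ (Fin d), (∏ i, ψ i ^ a i) * (starRingEnd ℂ) (∏ i, ψ i ^ b i) ∂μ = 0 := by
  obtain ⟨j, hj⟩ := Function.ne_iff.1 hab
  obtain ⟨w, hw, hw1⟩ : ∃ w : ℂ, w * (starRingEnd ℂ) w = 1 ∧ w ^ a j * (starRingEnd ℂ) w ^ b j ≠ 1 := by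
    refine ⟨Complex.exp (Complex.I), ?_, ?_⟩
    · rw [← Complex.exp_conj, ← Complex.exp_add]; simp
    · rw [← Complex.exp_conj, ← Complex.exp_nat_mul, ← Complex.exp_nat_mul, ← Complex.exp_add]
      simp only [Complex.conj_I]
      intro h
      rw [Complex.exp_eq_one_iff] at h
      obtain ⟨n, hn⟩ := h
      have h2 : ((a j : ℝ) - b j) = n * (2 * Real.pi) := by
        have := congrArg Complex.im hn
        simp at this
        linarith
      by_cases hn0 : n = 0
      · subst hn0
        simp at h2
        exact hj (by exact_mod_cast (sub_eq_zero.1 h2))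
      · have hir := irrational_pi
        apply hir
        refine ⟨((a j : ℚ) - b j) / (n * 2), ?_⟩
        have : (n:ℝ) ≠ 0 := by exact_mod_cast hn0
        push_cast
        rw [h2]; field_simp
  set D : Fin d → ℂ := Function.update 1 j w with hD
  have hDm : Matrix.diagonal D ∈ Matrix.unitaryGroup (Fin d) ℂ := by
    rw [Matrix.mem_unitaryGroup_iff, Matrix.star_eq_conjTranspose, Matrix.diagonal_conjTranspose,
      Matrix.diagonal_mul_diagonal, ← Matrix.diagonal_one]
    congr 1
    ext i
    by_cases h : i = j
    · subst h; simpa [hD] using hw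
    · simp [hD, h]
  set I := ∫ ψ : EuclideanSpace ℂ (Fin d), (∏ i, ψ i ^ a i) * (starRingEnd ℂ) (∏ i, ψ i ^ b i) ∂μ with hI
  have key : I = (w ^ a j * (starRingEnd ℂ) w ^ b j) * I := by
    have hc : Continuous (fun ψ : EuclideanSpace ℂ (Fin d) =>
        (∏ i, ψ i ^ a i) * (starRingEnd ℂ) (∏ i, ψ i ^ b i)) := by
      refine Continuous.mul (by fun_prop) (Complex.continuous_conj.comp (by fun_prop))
    conv_lhs => rw [hI, ← int_unitary μ hinv _ hDm _ hc]
    rw [hI, ← integral_const_mul]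
    congr 1
    ext ψ
    have hp : ∀ c : Fin d → ℕ, ∏ i, (D i) ^ c i = w ^ c j := by
      intro c
      rw [Finset.prod_eq_single j]
      · simp [hD]
      · intro i _ hi; simp [hD, hi]
      · simp
    simp only [Matrix.mulVec_diagonal, mul_pow, Finset.prod_mul_distrib, hp, map_mul, map_pow]
    ring
  have : (1 - (w ^ a j * (starRingEnd ℂ) w ^ b j)) * I = 0 := by linear_combination key
  rcases mul_eq_zero.1 this with h | h
  · exact absurd (sub_eq_zero.1 h).symm hw1
  · exact h


lemma moment
    (hsphere : μ (Metric.sphere (0 : EuclideanSpace ℂ (Fin d)) 1) = 1)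
    (hinv : ∀ U ∈ Matrix.unitaryGroup (Fin d) ℂ,
      Measure.map (fun x : EuclideanSpace ℂ (Fin d) =>
        (EuclideanSpace.equiv (Fin d) ℂ).symm
          (Matrix.mulVec U ((EuclideanSpace.equiv (Fin d) ℂ) x))) μ = μ)
    (i0 : Fin d) (n : ℕ) (a : Fin d → ℕ)
    (ha : a ∈ Finset.piAntidiag (Finset.univ : Finset (Fin d)) n) :
    (Nat.multinomial Finset.univ a : ℝ) * ∫ ψ : EuclideanSpace ℂ (Fin d), ∏ i, (‖ψ i‖ ^ 2) ^ a i ∂μ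
      = ∫ ψ : EuclideanSpace ℂ (Fin d), ‖ψ i0‖ ^ (2 * n) ∂μ := by
  classical
  set c := ∫ ψ : EuclideanSpace ℂ (Fin d), ‖ψ i0‖ ^ (2 * n) ∂μ with hc
  set M : (Fin d → ℕ) → ℝ := fun a => ∫ ψ : EuclideanSpace ℂ (Fin d), ∏ i, (‖ψ i‖ ^ 2) ^ a i ∂μ with hM
  set A := Finset.piAntidiag (Finset.univ : Finset (Fin d)) n with hA
  set m : (Fin d → ℕ) → ℝ := fun a => (Nat.multinomial Finset.univ a : ℝ) with hm
  have hcont : ∀ a b : Fin d → ℕ, Continuous (fun ψ : EuclideanSpace ℂ (Fin d) =>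
        (∏ i, ψ i ^ a i) * (starRingEnd ℂ) (∏ i, ψ i ^ b i)) := fun a b =>
      Continuous.mul (by fun_prop) (Complex.continuous_conj.comp (by fun_prop))
  have h1 : ∀ x : Fin d → ℝ, ∑ b ∈ A, (m b ^ 2 * M b) * ∏ i, x i ^ (2 * b i)
      = ∑ b ∈ A, (m b * c) * ∏ i, x i ^ (2 * b i) := by
    intro x
    have hr := radial μ hinv i0 n x
    have e2 : (∑ i, x i ^ 2) ^ n * c = ∑ b ∈ A, (m b * c) * ∏ i, x i ^ (2 * b i) := by
      rw [Finset.sum_pow_eq_sum_piAntidiag, Finset.sum_mul]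
      refine Finset.sum_congr rfl fun b _ => ?_
      simp only [← pow_mul, hm]
      ring
    rw [← e2, ← hr]
    have e3 : ((∫ ψ : EuclideanSpace ℂ (Fin d), ‖∑ i, (x i : ℂ) * ψ i‖ ^ (2 * n) ∂μ : ℝ) : ℂ)
        = ((∑ b ∈ A, (m b ^ 2 * M b) * ∏ i, x i ^ (2 * b i) : ℝ) : ℂ) := by
      rw [← integral_complex_ofReal]
      have e4 : ∀ ψ : EuclideanSpace ℂ (Fin d),
          ((‖∑ i, (x i : ℂ) * ψ i‖ ^ (2 * n) : ℝ) : ℂ) =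
          ∑ a ∈ A, ∑ b ∈ A, ((m a * ∏ i, x i ^ a i) * (m b * ∏ i, x i ^ b i) : ℝ) *
            ((∏ i, ψ i ^ a i) * (starRingEnd ℂ) (∏ i, ψ i ^ b i)) := by
        intro ψ
        have e5 : (∑ i, (x i : ℂ) * ψ i) ^ n =
            ∑ a ∈ A, ((m a * ∏ i, x i ^ a i : ℝ) : ℂ) * ∏ i, ψ i ^ a i := by
          rw [Finset.sum_pow_eq_sum_piAntidiag]
          refine Finset.sum_congr rfl fun b _ => ?_
          simp only [mul_pow, Finset.prod_mul_distrib, hm]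
          push_cast
          ring
        have e6 : ((‖∑ i, (x i : ℂ) * ψ i‖ ^ (2 * n) : ℝ) : ℂ) =
            (∑ i, (x i : ℂ) * ψ i) ^ n * (starRingEnd ℂ) ((∑ i, (x i : ℂ) * ψ i) ^ n) := by
          rw [Complex.mul_conj, Complex.normSq_eq_norm_sq, norm_pow, ← pow_mul, mul_comm n 2]
        rw [e6, e5, map_sum, Finset.sum_mul_sum]
        refine Finset.sum_congr rfl fun a _ => Finset.sum_congr rfl fun b _ => ?_
        rw [map_mul, Complex.conj_ofReal, Complex.ofReal_mul (m a * _)]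
        ring
      simp_rw [e4]
      rw [integral_finsetSum]
      swap
      · intro a _
        apply integrable_cont μ hsphere
        refine continuous_finsetSum _ fun b _ => continuous_const.mul (hcont a b)
      rw [Complex.ofReal_sum]
      refine Finset.sum_congr rfl fun a haA => ?_
      rw [integral_finsetSum]
      swap
      · intro b _
        apply integrable_cont μ hsphere
        exact continuous_const.mul (hcont a b)
      rw [Finset.sum_eq_single a]
      · rw [integral_const_mul]
        have e7 : ∫ ψ : EuclideanSpace ℂ (Fin d), (∏ i, ψ i ^ a i) * (starRingEnd ℂ) (∏ i, ψ i ^ a i) ∂μ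
            = (M a : ℂ) := by
          rw [hM, ← integral_complex_ofReal]
          congr 1
          ext ψ
          rw [Complex.mul_conj, Complex.normSq_eq_norm_sq, norm_prod, ← Finset.prod_pow]
          congr 1
          refine Finset.prod_congr rfl fun i _ => ?_
          rw [norm_pow, ← pow_mul, ← pow_mul, mul_comm]
        rw [e7, ← Complex.ofReal_mul]
        congr 1
        have : ∏ i, x i ^ (2 * a i) = (∏ i, x i ^ a i) * ∏ i, x i ^ a i := by
          rw [← Finset.prod_mul_distrib]
          refine Finset.prod_congr rfl fun i _ => by ring
        rw [this]; ring
      · intro b _ hb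
        rw [integral_const_mul, offdiag μ hinv a b hb.symm, mul_zero]
      · intro h; exact absurd haA h
    exact (Complex.ofReal_injective e3).symm
  -- compare coefficients
  set T : (Fin d → ℕ) → (Fin d →₀ ℕ) := fun b => Finsupp.equivFunOnFinite.symm (fun i => 2 * b i) with hT
  have hTinj : ∀ b b', T b = T b' ↔ b = b' := by
    intro b b'
    simp only [hT, EmbeddingLike.apply_eq_iff_eq]
    constructor
    · intro h; ext i; have := congrFun h i; simpa using this
    · rintro rfl; rfl
  have hpoly : (∑ b ∈ A, MvPolynomial.monomial (T b) (m b ^ 2 * M b) : MvPolynomial (Fin d) ℝ)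
      = ∑ b ∈ A, MvPolynomial.monomial (T b) (m b * c) := by
    apply MvPolynomial.funext
    intro x
    simp only [map_sum, MvPolynomial.eval_monomial]
    have hp : ∀ b, ((T b).prod fun i e => x i ^ e) = ∏ i, x i ^ (2 * b i) := by
      intro b
      rw [Finsupp.prod_fintype _ _ (by simp)]
      rfl
    simp only [hp]
    exact h1 x
  have hco := congrArg (MvPolynomial.coeff (T a)) hpoly
  simp only [MvPolynomial.coeff_sum, MvPolynomial.coeff_monomial, hTinj, Finset.sum_ite_eq', ha, if_true] at hco
  have hm0 : m a ≠ 0 := by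
    simp only [hm]
    exact_mod_cast (Nat.multinomial_pos _ _).ne'
  apply mul_left_cancel₀ hm0
  change m a * (m a * M a) = m a * c
  linarith

lemma diag_moment
    (hsphere : μ (Metric.sphere (0 : EuclideanSpace ℂ (Fin d)) 1) = 1)
    (hinv : ∀ U ∈ Matrix.unitaryGroup (Fin d) ℂ,
      Measure.map (fun x : EuclideanSpace ℂ (Fin d) =>
        (EuclideanSpace.equiv (Fin d) ℂ).symm
          (Matrix.mulVec U ((EuclideanSpace.equiv (Fin d) ℂ) x))) μ = μ)
    (i0 : Fin d) (n : ℕ) (l : Fin d → ℝ) :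
    ∫ ψ : EuclideanSpace ℂ (Fin d), (∑ i, l i * ‖ψ i‖ ^ 2) ^ n ∂μ
      = (∫ ψ : EuclideanSpace ℂ (Fin d), ‖ψ i0‖ ^ (2 * n) ∂μ) * hcomp l n := by
  simp_rw [Finset.sum_pow_eq_sum_piAntidiag]
  rw [integral_finsetSum]
  swap
  · intro a _
    apply integrable_cont μ hsphere
    fun_prop
  rw [hcomp, Finset.mul_sum]
  refine Finset.sum_congr rfl fun a ha => ?_
  rw [← moment μ hsphere hinv i0 n a ha]
  simp only [mul_pow, Finset.prod_mul_distrib]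
  rw [integral_const_mul, integral_const_mul]
  ring

lemma exists_idx
    (hsphere : μ (Metric.sphere (0 : EuclideanSpace ℂ (Fin d)) 1) = 1)
    : Nonempty (Fin d) := by
  by_contra h
  rw [not_nonempty_iff] at h
  obtain ⟨x, hx⟩ := (ae_sphere μ hsphere).exists
  rw [Subsingleton.elim x 0] at hx
  simp at hx

lemma diag_bound
    (hsphere : μ (Metric.sphere (0 : EuclideanSpace ℂ (Fin d)) 1) = 1)
    (hinv : ∀ U ∈ Matrix.unitaryGroup (Fin d) ℂ,
      Measure.map (fun x : EuclideanSpace ℂ (Fin d) =>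
        (EuclideanSpace.equiv (Fin d) ℂ).symm
          (Matrix.mulVec U ((EuclideanSpace.equiv (Fin d) ℂ) x))) μ = μ)
    (q : ℕ) (l : Fin d → ℝ) :
    ∫ ψ : EuclideanSpace ℂ (Fin d), (∑ i, l i * ‖ψ i‖ ^ 2) ^ (2 * q) ∂μ
      ≤ ((2 * q).factorial : ℝ) / (d : ℝ) ^ (2 * q) * ((∑ i, l i ^ 2) + (∑ i, l i) ^ 2) ^ q := by
  obtain ⟨i0⟩ := exists_idx μ hsphere
  have hd : (0:ℝ) < d := by
    have := i0.pos
    exact_mod_cast this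
  set c := ∫ ψ : EuclideanSpace ℂ (Fin d), ‖ψ i0‖ ^ (2 * (2 * q)) ∂μ with hc
  set N : ℝ := ((Finset.piAntidiag (Finset.univ : Finset (Fin d)) (2 * q)).card : ℝ) with hN
  have h1 : c * N = 1 := by
    have h := diag_moment μ hsphere hinv i0 (2 * q) (fun _ => 1)
    have h2 : hcomp (fun _ : Fin d => (1:ℝ)) (2 * q) = N := by simp [hcomp, hN]
    rw [h2] at h
    rw [hc, ← h]
    have : ∀ᵐ ψ ∂μ, (∑ i, 1 * ‖ψ i‖ ^ 2) ^ (2 * q) = (1:ℝ) := by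
      filter_upwards [ae_sphere μ hsphere] with ψ hψ
      have := EuclideanSpace.norm_sq_eq ψ
      simp only [one_mul]
      rw [← this, hψ]; simp
    rw [integral_congr_ae this]; simp
  have hc0 : 0 ≤ c := integral_nonneg fun ψ => by positivity
  have hcle : c ≤ ((2 * q).factorial : ℝ) / (d : ℝ) ^ (2 * q) := by
    rw [le_div_iff₀ (by positivity)]
    calc c * (d:ℝ) ^ (2 * q) ≤ c * ((2 * q).factorial * N) :=
          mul_le_mul_of_nonneg_left (card_bound d (2 * q)) hc0
      _ = (2 * q).factorial * (c * N) := by ring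
      _ = _ := by rw [h1, mul_one]
  rw [diag_moment μ hsphere hinv i0]
  have hS : 0 ≤ (∑ i, l i ^ 2) + (∑ i, l i) ^ 2 :=
    add_nonneg (Finset.sum_nonneg fun i _ => sq_nonneg _) (sq_nonneg _)
  have hb := hcomp_bound l (Real.sqrt ((∑ i, l i ^ 2) + (∑ i, l i) ^ 2)) (Real.sqrt_nonneg _)
    (Real.sq_sqrt hS).symm (2 * q)
  rw [pow_mul, Real.sq_sqrt hS] at hb
  calc c * hcomp l (2 * q) ≤ c * ((∑ i, l i ^ 2) + (∑ i, l i) ^ 2) ^ q :=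
        mul_le_mul_of_nonneg_left ((le_abs_self _).trans hb) hc0
    _ ≤ _ := mul_le_mul_of_nonneg_right hcle (pow_nonneg hS q)

end meas

lemma quad_form {d : ℕ} (Δ : Matrix (Fin d) (Fin d) ℂ) (ψ : Fin d → ℂ) :
    ∑ i, ∑ j, (starRingEnd ℂ) (ψ i) * Δ i j * ψ j = star ψ ⬝ᵥ (Δ *ᵥ ψ) := by
  simp only [dotProduct, mulVec, Finset.mul_sum, Pi.star_apply, RCLike.star_def, mul_assoc]

theorem stmt10 (d : ℕ) [MeasurableSpace (EuclideanSpace ℂ (Fin d))]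
    [BorelSpace (EuclideanSpace ℂ (Fin d))] (μ : Measure (EuclideanSpace ℂ (Fin d))) [IsProbabilityMeasure μ]
    (hsphere : μ (Metric.sphere (0 : EuclideanSpace ℂ (Fin d)) 1) = 1)
    (hinv : ∀ U ∈ Matrix.unitaryGroup (Fin d) ℂ,
      Measure.map (fun x : EuclideanSpace ℂ (Fin d) =>
        (EuclideanSpace.equiv (Fin d) ℂ).symm
          (Matrix.mulVec U ((EuclideanSpace.equiv (Fin d) ℂ) x))) μ = μ)
    (Δ : Matrix (Fin d) (Fin d) ℂ) (hΔ : Δ.IsHermitian)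
    (q : ℕ) (hq : 1 ≤ q)
    (f : EuclideanSpace ℂ (Fin d) → ℝ)
    (hf : ∀ ψ, f ψ = (∑ i, ∑ j, (starRingEnd ℂ) (ψ i) * Δ i j * ψ j).re) :
    (∫ ψ, f ψ ^ (2 * q) ∂μ) ≤
        ((2 * q).factorial : ℝ) / (d : ℝ) ^ (2 * q) *
          ((Matrix.trace (Δ * Δ)).re + ((Matrix.trace Δ).re) ^ 2) ^ q ∧
      (∫ ψ, ((d : ℝ) * |f ψ|) ^ (2 * q) ∂μ) ^ ((1 : ℝ) / (2 * q)) ≤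
        2 * q * Real.sqrt ((Matrix.trace (Δ * Δ)).re + ((Matrix.trace Δ).re) ^ 2) := by
  set l := hΔ.eigenvalues with hl
  set U : Matrix (Fin d) (Fin d) ℂ := (hΔ.eigenvectorUnitary : Matrix (Fin d) (Fin d) ℂ) with hU
  have hUm : U ∈ Matrix.unitaryGroup (Fin d) ℂ := hΔ.eigenvectorUnitary.2
  set D : Matrix (Fin d) (Fin d) ℂ := Matrix.diagonal (fun i => (l i : ℂ)) with hD
  have hspec : Δ = U * D * star U := by
    have := hΔ.spectral_theorem
    rw [Unitary.conjStarAlgAut_apply] at this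
    exact this
  have hUU : star U * U = 1 := (Matrix.mem_unitaryGroup_iff').1 hUm
  have ht1 : (Matrix.trace Δ).re = ∑ i, l i := by
    rw [hspec, Matrix.trace_mul_comm, ← mul_assoc, hUU, one_mul, hD, Matrix.trace_diagonal]
    simp
  have ht2 : (Matrix.trace (Δ * Δ)).re = ∑ i, l i ^ 2 := by
    have : Δ * Δ = U * (D * D) * star U := by
      calc Δ * Δ = U * D * (star U * U) * D * star U := by
            conv_lhs => rw [hspec]
            simp only [mul_assoc]
        _ = _ := by rw [hUU]; simp only [mul_assoc, one_mul]
    rw [this, Matrix.trace_mul_comm, ← mul_assoc, hUU, one_mul, hD, Matrix.diagonal_mul_diagonal,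
      Matrix.trace_diagonal]
    simp [sq]
  have hfc : Continuous f := by
    have : f = fun ψ => (∑ i, ∑ j, (starRingEnd ℂ) (ψ i) * Δ i j * ψ j).re := funext hf
    rw [this]
    refine Complex.continuous_re.comp ?_
    refine continuous_finsetSum _ fun i _ => continuous_finsetSum _ fun j _ => ?_
    refine Continuous.mul (Continuous.mul (Complex.continuous_conj.comp (by fun_prop))
      continuous_const) (by fun_prop)
  have hfU : ∀ ψ : EuclideanSpace ℂ (Fin d),
      f (WithLp.toLp 2 (U *ᵥ (WithLp.ofLp ψ))) = ∑ i, l i * ‖ψ i‖ ^ 2 := by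
    intro ψ
    rw [hf, quad_form, Matrix.star_mulVec, ← Matrix.dotProduct_mulVec, Matrix.mulVec_mulVec,
      Matrix.mulVec_mulVec]
    have : Uᴴ * (Δ * U) = D := by
      rw [← Matrix.star_eq_conjTranspose, hspec]
      calc star U * (U * D * star U * U) = (star U * U) * D * (star U * U) := by
            simp only [mul_assoc]
        _ = D := by rw [hUU]; simp
    rw [mul_assoc, this, hD]
    simp only [dotProduct, Matrix.mulVec_diagonal, Complex.re_sum]
    refine Finset.sum_congr rfl fun i _ => ?_
    have : star (WithLp.ofLp ψ) i * ((l i : ℂ) * ψ i) = ((l i * ‖ψ i‖ ^ 2 : ℝ) : ℂ) := by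
      rw [Complex.ofReal_mul, ← Complex.normSq_eq_norm_sq, Complex.normSq_eq_conj_mul_self]
      simp only [Pi.star_apply, RCLike.star_def]
      ring
    rw [this, Complex.ofReal_re]
  have first : (∫ ψ, f ψ ^ (2 * q) ∂μ) ≤
        ((2 * q).factorial : ℝ) / (d : ℝ) ^ (2 * q) *
          ((Matrix.trace (Δ * Δ)).re + ((Matrix.trace Δ).re) ^ 2) ^ q := by
    rw [← int_unitary μ hinv U hUm (fun ψ => f ψ ^ (2 * q)) (by fun_prop)]
    simp only [hfU]
    rw [ht1, ht2]
    exact diag_bound μ hsphere hinv q l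
  refine ⟨first, ?_⟩
  have hS : 0 ≤ (Matrix.trace (Δ * Δ)).re + ((Matrix.trace Δ).re) ^ 2 := by
    rw [ht1, ht2]
    exact add_nonneg (Finset.sum_nonneg fun i _ => sq_nonneg _) (sq_nonneg _)
  set S := (Matrix.trace (Δ * Δ)).re + ((Matrix.trace Δ).re) ^ 2 with hSd
  obtain ⟨i0⟩ := exists_idx μ hsphere
  have hd : (0:ℝ) < d := by
    have := i0.pos
    exact_mod_cast this
  have e1 : ∫ ψ, ((d : ℝ) * |f ψ|) ^ (2 * q) ∂μ = (d:ℝ) ^ (2 * q) * ∫ ψ, f ψ ^ (2 * q) ∂μ := by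
    rw [← integral_const_mul]
    congr 1
    ext ψ
    rw [mul_pow, pow_mul |f ψ|, sq_abs, ← pow_mul]
  have e2 : ∫ ψ, ((d : ℝ) * |f ψ|) ^ (2 * q) ∂μ ≤ (2 * q * Real.sqrt S) ^ (2 * q) := by
    rw [e1]
    calc (d:ℝ) ^ (2 * q) * ∫ ψ, f ψ ^ (2 * q) ∂μ
        ≤ (d:ℝ) ^ (2 * q) * (((2 * q).factorial : ℝ) / (d : ℝ) ^ (2 * q) * S ^ q) :=
          mul_le_mul_of_nonneg_left first (by positivity)
      _ = ((2 * q).factorial : ℝ) * S ^ q := by field_simp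
      _ ≤ ((2 * q : ℕ) : ℝ) ^ (2 * q) * S ^ q := by
        refine mul_le_mul_of_nonneg_right ?_ (pow_nonneg hS q)
        exact_mod_cast Nat.factorial_le_pow (2 * q)
      _ = _ := by
        rw [mul_pow, pow_mul (Real.sqrt S), Real.sq_sqrt hS]
        push_cast
        rfl
  have h0 : 0 ≤ ∫ ψ, ((d : ℝ) * |f ψ|) ^ (2 * q) ∂μ := integral_nonneg fun ψ => by positivity
  have hq' : (2 * q : ℕ) ≠ 0 := by omega
  calc _ ≤ ((2 * q * Real.sqrt S) ^ (2 * q)) ^ ((1 : ℝ) / (2 * q)) :=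
        Real.rpow_le_rpow h0 e2 (by positivity)
    _ = _ := by
      have := Real.pow_rpow_inv_natCast (x := 2 * q * Real.sqrt S) (by positivity) hq'
      rw [one_div]
      push_cast at this
      exact this
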